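/- Define the sequence (a_i) of reals by a_0 = 1 and a_{i+1} = 1/(6 − 4·a_i). Then for every natural number i and every real ε > 0, there exists a constant C(i, ε) > 0 such that every connected n-vertex graph G has a +⌈C(i, ε)·n^{a_i + ε}⌉ additive emulator with at most C(i, ε)·n edges. -/

import Mathlib

open SimpleGraph

/-- The weighted distance in an emulator `H` with edge weights `w`:
the minimum total weight of a walk from `s` to `t` (`⊤` if none exists). -/
noncomputable def emulatorDist {V : Type*} (H : SimpleGraph V) (w : Sym2 V → ℕ)
    (s t : V) : ℕ∞ :=
  ⨅ p : H.Walk s t, ((p.edges.map w).sum : ℕ∞)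

/-- `H` (with positive integer edge weights `w`) is a `+k` additive emulator of `G`:
for all vertices `s, t`, `dist_G(s,t) ≤ dist_H(s,t) ≤ dist_G(s,t) + k`. -/
def IsAdditiveEmulator {V : Type*} (G H : SimpleGraph V) (w : Sym2 V → ℕ)
    (k : ℕ) : Prop :=
  (∀ e ∈ H.edgeSet, 0 < w e) ∧
  ∀ s t : V, (G.dist s t : ℕ∞) ≤ emulatorDist H w s t ∧
    emulatorDist H w s t ≤ (G.dist s t : ℕ∞) + (k : ℕ∞)

/-- The sequence `a_0 = 1`, `a_{i+1} = 1 / (6 - 4 a_i)`. -/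
noncomputable def aSeq : ℕ → ℝ
  | 0 => 1
  | i + 1 => 1 / (6 - 4 * aSeq i)

/-!
Suppose that errors `n ^ a` are achievable with linearly many edges. Given a graph on `n` vertices
and a radius `r`, choose balls of radius roughly `r` whose size barely grows when the radius is
multiplied by a constant, so that disjoint cores can be thickened to a cover of small overlap, and
surround each ball by a sphere (its shell) with few vertices. A geodesic then passes from shell to
shell. The shells of neighbouring clusters are joined completely if the core of the wider cluster
has at most `r ^ 2` vertices, which creates no error, and by the given emulator of the surrounding
ball otherwise, so that crossing a core of size `k > r ^ 2` costs `k ^ a ≤ k * r ^ (2 * (a - 1))`.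
Moreover join all pairs among about `√n` hubs which, up to factors `n ^ δ`, hit the cores along the
beginning and along the end of each geodesic as soon as these contain `√n` vertices. Then only the
light segments before the first and after the last hub are crossed cluster by cluster. The resulting
error `r + √n * r ^ (2 * (a - 1))` is balanced by `r = n ^ (1 / (6 - 4 * a))`.
-/

open Finset

universe u

variable {V : Type u} {G : SimpleGraph V}

section WeightedEdges

/-- The edge weight `s(u, v) ↦ dist_G(u, v)`, the smallest one for which no walk of an emulator is
shorter than the `G`-distance of its endpoints. -/
noncomputable def distWeight (G : SimpleGraph V) : Sym2 V → ℕ :=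
  Sym2.lift ⟨G.dist, fun _ _ => dist_comm⟩

/-- `t` can be reached from `s` along edges of `E`, each weighted by the `G`-distance of its
endpoints, at total cost at most `ℓ`. Loops in `E` are allowed and ignored. -/
def JoinedWithin (G : SimpleGraph V) (E : Finset (Sym2 V)) (s t : V) (ℓ : ℕ) : Prop :=
  ∃ p : (fromEdgeSet (E : Set (Sym2 V))).Walk s t, (p.edges.map (distWeight G)).sum ≤ ℓ

/-- The edges of `E`, weighted by `G`-distances, preserve all distances up to an additive `k`. -/
def HasAdditiveError (G : SimpleGraph V) (E : Finset (Sym2 V)) (k : ℕ) : Prop :=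
  ∀ s t, JoinedWithin G E s t (G.dist s t + k)

variable {E E' : Finset (Sym2 V)} {s t v : V} {k ℓ ℓ' : ℕ}

namespace JoinedWithin

theorem refl (G : SimpleGraph V) (E : Finset (Sym2 V)) (s : V) (ℓ : ℕ) : JoinedWithin G E s s ℓ :=
  ⟨.nil, by simp⟩

theorem mono (h : JoinedWithin G E s t ℓ) (hℓ : ℓ ≤ ℓ') : JoinedWithin G E s t ℓ' :=
  h.imp fun _ hp => hp.trans hℓ

theorem mono_edges (h : JoinedWithin G E s t ℓ) (hE : E ⊆ E') : JoinedWithin G E' s t ℓ := by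
  obtain ⟨p, hp⟩ := h
  exact ⟨p.mapLe (fromEdgeSet_mono (coe_subset.2 hE)), by rwa [Walk.edges_mapLe_eq_edges]⟩

theorem symm (h : JoinedWithin G E s t ℓ) : JoinedWithin G E t s ℓ := by
  obtain ⟨p, hp⟩ := h
  exact ⟨p.reverse, by rwa [Walk.edges_reverse, List.map_reverse, List.sum_reverse]⟩

theorem trans (h : JoinedWithin G E s v ℓ) (h' : JoinedWithin G E v t ℓ') :
    JoinedWithin G E s t (ℓ + ℓ') := by
  obtain ⟨p, hp⟩ := h
  obtain ⟨q, hq⟩ := h'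
  refine ⟨p.append q, ?_⟩
  rw [Walk.edges_append, List.map_append, List.sum_append]
  exact add_le_add hp hq

theorem of_mem (h : s(s, t) ∈ E) : JoinedWithin G E s t (G.dist s t) := by
  obtain rfl | hst := eq_or_ne s t
  · exact refl G E s _
  · exact ⟨.cons ((fromEdgeSet_adj _).2 ⟨h, hst⟩) .nil, by simp [distWeight]⟩

theorem map {W : Type*} [DecidableEq V] {G' : SimpleGraph W} {E : Finset (Sym2 W)} {s t : W}
    (f : W ↪ V) (hf : ∀ x y, G.dist (f x) (f y) ≤ G'.dist x y) (h : JoinedWithin G' E s t ℓ) :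
    JoinedWithin G (E.image (Sym2.map f)) (f s) (f t) ℓ := by
  obtain ⟨p, hp⟩ := h
  let φ : fromEdgeSet (E : Set (Sym2 W)) →g fromEdgeSet (E.image (Sym2.map f) : Set (Sym2 V)) :=
    ⟨f, fun {a b} hab => (fromEdgeSet_adj _).2
      ⟨mem_image_of_mem (Sym2.map f) hab.1, f.injective.ne hab.2⟩⟩
  refine ⟨p.map φ, le_trans ?_ hp⟩
  rw [Walk.edges_map, List.map_map]
  exact List.sum_le_sum fun e _ => e.ind hf

end JoinedWithin

theorem dist_le_sum_distWeight (hG : G.Connected) {H : SimpleGraph V} (p : H.Walk s t) :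
    G.dist s t ≤ (p.edges.map (distWeight G)).sum := by
  induction p with
  | nil => simp
  | cons _ _ ih =>
    rw [Walk.edges_cons, List.map_cons, List.sum_cons]
    exact hG.dist_triangle.trans (Nat.add_le_add_left ih _)

theorem HasAdditiveError.isAdditiveEmulator (hG : G.Connected) (h : HasAdditiveError G E k) :
    IsAdditiveEmulator G (fromEdgeSet (E : Set (Sym2 V))) (distWeight G) k := by
  refine ⟨?_, fun s t => ⟨le_iInf fun p => ?_, ?_⟩⟩
  · rintro ⟨u, v⟩ huv
    exact hG.pos_dist_of_ne ((mem_edgeSet _).1 huv).ne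
  · exact_mod_cast dist_le_sum_distWeight hG p
  · obtain ⟨p, hp⟩ := h s t
    exact (iInf_le _ p).trans (mod_cast hp)

theorem ncard_edgeSet_fromEdgeSet_le (E : Finset (Sym2 V)) :
    (fromEdgeSet (E : Set (Sym2 V))).edgeSet.ncard ≤ #E := by
  rw [edgeSet_fromEdgeSet, ← Set.ncard_coe_finset]
  exact Set.ncard_le_ncard Set.sdiff_subset E.finite_toSet

end WeightedEdges

section Geodesics

theorem exists_geodesic (hG : G.Connected) (s t : V) :
    ∃ f : ℕ → V, f 0 = s ∧ f (G.dist s t) = t ∧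
      ∀ a b, a ≤ b → b ≤ G.dist s t → a + G.dist (f a) (f b) = b := by
  obtain ⟨p, hp⟩ := hG.exists_walk_length_eq_dist s t
  have dist_getVert_le (a k : ℕ) : G.dist (p.getVert a) (p.getVert (a + k)) ≤ k := by
    rw [← p.drop_getVert a k]
    exact (dist_le ((p.drop a).take k)).trans (by rw [Walk.take_length]; exact inf_le_left)
  have getVert_dist : p.getVert (G.dist s t) = t := by rw [← hp, p.getVert_length]
  refine ⟨p.getVert, p.getVert_zero, getVert_dist, fun a b hab hb => ?_⟩
  have dist_start := dist_getVert_le 0 a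
  have dist_mid := dist_getVert_le a (b - a)
  have dist_end := dist_getVert_le b (G.dist s t - b)
  rw [zero_add, p.getVert_zero] at dist_start
  rw [Nat.add_sub_cancel' hab] at dist_mid
  rw [Nat.add_sub_cancel' hb, getVert_dist] at dist_end
  have triangle_left := hG.dist_triangle (u := s) (v := p.getVert a) (w := t)
  have triangle_right := hG.dist_triangle (u := p.getVert a) (v := p.getVert b) (w := t)
  lia

theorem exists_walk_induce_length_eq_dist (hG : G.Connected) {S : Set V} {x y : V} (hx : x ∈ S)
    (hy : y ∈ S) (hS : ∀ z, G.dist x z + G.dist z y = G.dist x y → z ∈ S) :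
    ∃ p : (G.induce S).Walk ⟨x, hx⟩ ⟨y, hy⟩, p.length = G.dist x y := by
  classical
  obtain ⟨p, hp⟩ := hG.exists_walk_length_eq_dist x y
  have support_subset : ∀ z ∈ p.support, z ∈ S := by
    intro z hz
    have length_split := congrArg Walk.length (p.take_spec hz)
    rw [Walk.length_append] at length_split
    have dist_take := dist_le (p.takeUntil z hz)
    have dist_drop := dist_le (p.dropUntil z hz)
    have triangle := hG.dist_triangle (u := x) (v := z) (w := y)
    exact hS z (by lia)
  have length_induce := congrArg Walk.length (p.map_induce support_subset)
  rw [Walk.length_map] at length_induce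
  exact ⟨p.induce S support_subset, length_induce.trans hp⟩

theorem dist_le_dist_induce {S : Set V} (hS : (G.induce S).Connected) (x y : S) :
    G.dist x y ≤ (G.induce S).dist x y := by
  obtain ⟨p, hp⟩ := hS.exists_walk_length_eq_dist x y
  rw [← hp, ← p.length_map (Embedding.induce S).toHom]
  exact dist_le _

theorem dist_lt_card [Fintype V] (hG : G.Connected) (s t : V) :
    G.dist s t < Fintype.card V := by
  obtain ⟨p, hp, hlen⟩ := hG.exists_path_of_dist s t
  exact hlen ▸ hp.length_lt

end Geodesics

section Balls

variable [Fintype V] {v x : V} {R R' : ℕ}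

/-- The closed ball of radius `R` around `v`. -/
noncomputable def distBall (G : SimpleGraph V) (v : V) (R : ℕ) : Finset V :=
  {x | G.dist v x ≤ R}

/-- The sphere of radius `R` around `v`. -/
noncomputable def distSphere (G : SimpleGraph V) (v : V) (R : ℕ) : Finset V :=
  {x | G.dist v x = R}

theorem mem_distBall : x ∈ distBall G v R ↔ G.dist v x ≤ R := by simp [distBall]

theorem mem_distSphere : x ∈ distSphere G v R ↔ G.dist v x = R := by simp [distSphere]

theorem self_mem_distBall (G : SimpleGraph V) (v : V) (R : ℕ) : v ∈ distBall G v R :=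
  mem_distBall.2 (by simp)

theorem distBall_mono (h : R ≤ R') : distBall G v R ⊆ distBall G v R' :=
  fun _ hx => mem_distBall.2 ((mem_distBall.1 hx).trans h)

theorem exists_scale_card_distBall_mul_le (G : SimpleGraph V) {A L b : ℕ} (hb : 1 ≤ b)
    (hA : Fintype.card V < A ^ L) (r : ℕ) (v : V) :
    ∃ R, r ≤ R ∧ R ≤ r * b ^ L ∧ #(distBall G v (b * R)) ≤ A * #(distBall G v R) := by
  by_contra! fast_growth
  have pow_le_card (k : ℕ) (hk : k ≤ L) : A ^ k ≤ #(distBall G v (r * b ^ k)) := by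
    induction k with
    | zero => exact card_pos.2 ⟨v, self_mem_distBall G v _⟩
    | succ k ih =>
      have growth := fast_growth (r * b ^ k) (Nat.le_mul_of_pos_right _ (by positivity))
        (by gcongr; lia)
      calc A ^ (k + 1) = A * A ^ k := pow_succ' A k
        _ ≤ A * #(distBall G v (r * b ^ k)) := by gcongr; exact ih (by lia)
        _ ≤ #(distBall G v (b * (r * b ^ k))) := growth.le
        _ = #(distBall G v (r * b ^ (k + 1))) := by rw [pow_succ']; congr 2; ring
  exact ((pow_le_card L le_rfl).trans (card_le_univ _)).not_gt hA

theorem exists_card_distSphere_mul_le (G : SimpleGraph V) (v : V) (a : ℕ) (hR : 0 < R) :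
    ∃ ρ, a ≤ ρ ∧ ρ < a + R ∧ R * #(distSphere G v ρ) ≤ #(distBall G v (a + R)) := by
  have sum_card_le : ∑ ρ ∈ Ico a (a + R), #(distSphere G v ρ) ≤ #(distBall G v (a + R)) := by
    simp only [distSphere]
    rw [sum_card_fiberwise_eq_card_filter]
    exact card_le_card fun x hx => mem_distBall.2 (mem_Ico.1 (mem_filter.1 hx).2).2.le
  have sum_le : ∑ ρ ∈ Ico a (a + R), R * #(distSphere G v ρ) ≤
      ∑ _ρ ∈ Ico a (a + R), #(distBall G v (a + R)) := by
    rw [← mul_sum, sum_const, Nat.card_Ico, Nat.add_sub_cancel_left, smul_eq_mul]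
    gcongr
  obtain ⟨ρ, hρ, hle⟩ := exists_le_of_sum_le (nonempty_Ico.2 (by lia)) sum_le
  exact ⟨ρ, (mem_Ico.1 hρ).1, (mem_Ico.1 hρ).2, hle⟩

theorem exists_pairwiseDisjoint_distBall_cover (hG : G.Connected) (R : V → ℕ) :
    ∃ I : Finset V, (I : Set V).PairwiseDisjoint (fun c => distBall G c (R c)) ∧
      ∀ x, ∃ c ∈ I, G.dist c x ≤ 2 * R c := by
  classical
  -- With sizes `3 ^ R c`, being at most twice as large means having at most the same radius.
  obtain ⟨I, -, disjoint, cover⟩ := Vitali.exists_disjoint_subfamily_covering_enlargement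
    (fun c => (distBall G c (R c) : Set V)) Set.univ (fun c => (3 : ℝ) ^ R c) 2 one_lt_two
    (fun _ _ => by positivity) (3 ^ univ.sup R)
    (fun c _ => pow_le_pow_right₀ (by norm_num) (le_sup (mem_univ c)))
    (fun c _ => ⟨c, self_mem_distBall G c _⟩)
  refine ⟨I.toFinset, fun c hc c' hc' hne => ?_, fun x => ?_⟩
  · exact disjoint_coe.1 (disjoint (Set.mem_toFinset.1 hc) (Set.mem_toFinset.1 hc') hne)
  · obtain ⟨c, hc, ⟨z, hzx, hzc⟩, size_le⟩ := cover x (Set.mem_univ x)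
    have radius_le : R x ≤ R c := by
      by_contra! hlt
      have size_lt : (3 : ℝ) ^ (R c + 1) ≤ 3 ^ R x := pow_le_pow_right₀ (by norm_num) hlt
      have size_pos : (0 : ℝ) < 3 ^ R c := by positivity
      rw [pow_succ] at size_lt
      linarith
    have dist_xz := mem_distBall.1 hzx
    have dist_cz := mem_distBall.1 hzc
    have triangle := hG.dist_triangle (u := c) (v := z) (w := x)
    rw [dist_comm (u := z)] at triangle
    exact ⟨c, Set.mem_toFinset.2 hc, by lia⟩

end Balls

section LocalEmulators

/-- Every finite connected graph, on `n` vertices say, has a distance-weighted emulator with at most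
`C * n` edges and additive error at most `h n`. -/
def HasSparseEmulators (C : ℕ) (h : ℕ → ℕ) : Prop :=
  ∀ (V : Type u) [Fintype V] (G : SimpleGraph V), G.Connected →
    ∃ E : Finset (Sym2 V), #E ≤ C * Fintype.card V ∧ HasAdditiveError G E (h (Fintype.card V))

variable [Fintype V]

theorem connected_induce_distBall (hG : G.Connected) (v : V) (M : ℕ) :
    (G.induce (distBall G v M : Set V)).Connected := by
  have hv : v ∈ (distBall G v M : Set V) := self_mem_distBall G v M
  refine (connected_iff_exists_forall_reachable _).2 ⟨⟨v, hv⟩, fun ⟨x, hx⟩ => ?_⟩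
  obtain ⟨p, -⟩ := exists_walk_induce_length_eq_dist hG hv hx fun z hz =>
    mem_distBall.2 (by have := mem_distBall.1 hx; lia)
  exact p.reachable

theorem dist_induce_distBall_le (hG : G.Connected) {v x y : V} {M : ℕ}
    (hM : G.dist v x + G.dist v y ≤ M) (hx : x ∈ (distBall G v M : Set V))
    (hy : y ∈ (distBall G v M : Set V)) :
    (G.induce (distBall G v M : Set V)).dist ⟨x, hx⟩ ⟨y, hy⟩ ≤ G.dist x y := by
  obtain ⟨p, hp⟩ := exists_walk_induce_length_eq_dist hG hx hy fun z hz => by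
    have via_x := hG.dist_triangle (u := v) (v := x) (w := z)
    have via_y := hG.dist_triangle (u := v) (v := y) (w := z)
    have via_v := hG.dist_triangle (u := x) (v := v) (w := y)
    rw [dist_comm (u := y)] at via_y
    rw [dist_comm (u := x) (v := v)] at via_v
    exact mem_distBall.2 (by lia)
  exact (dist_le p).trans hp.le

theorem HasSparseEmulators.exists_distBall {C : ℕ} {h : ℕ → ℕ}
    (hh : HasSparseEmulators.{u} C h) (hG : G.Connected) (v : V) (M : ℕ) :
    ∃ E : Finset (Sym2 V), #E ≤ C * #(distBall G v M) ∧
      ∀ x y, G.dist v x + G.dist v y ≤ M →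
        JoinedWithin G E x y (G.dist x y + h #(distBall G v M)) := by
  classical
  have connected := connected_induce_distBall hG v M
  obtain ⟨E, card_le, additive⟩ := hh _ _ connected
  simp only [coe_sort_coe, Fintype.card_coe] at card_le additive
  refine ⟨E.image (Sym2.map (↑)), card_image_le.trans card_le, fun x y hM => ?_⟩
  have hx : x ∈ distBall G v M := mem_distBall.2 (by lia)
  have hy : y ∈ distBall G v M := mem_distBall.2 (by lia)
  refine ((additive ⟨x, hx⟩ ⟨y, hy⟩).map (.subtype _) (dist_le_dist_induce connected)).mono ?_
  gcongr
  exact dist_induce_distBall_le hG hM hx hy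

end LocalEmulators

section Clustering

/-- A covering of `G` by the balls of radius `2 * radius i` around `centers` in which the balls of
radius `radius i` are disjoint, the volume grows at most by a factor `A` from `radius i` to
`12 * radius i`, and the sphere of radius `shellRadius i` is thin. All radii lie between `r` and
`M`. -/
structure BallClustering [Fintype V] (G : SimpleGraph V) (A r M : ℕ) where
  centers : Finset V
  radius : V → ℕ
  shellRadius : V → ℕ
  le_radius : ∀ i, r ≤ radius i
  radius_le : ∀ i, radius i ≤ M
  card_distBall_le : ∀ i, #(distBall G i (12 * radius i)) ≤ A * #(distBall G i (radius i))
  pairwiseDisjoint : (centers : Set V).PairwiseDisjoint fun i => distBall G i (radius i)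
  exists_dist_le : ∀ x, ∃ i ∈ centers, G.dist i x ≤ 2 * radius i
  two_mul_radius_le : ∀ i, 2 * radius i ≤ shellRadius i
  shellRadius_lt : ∀ i, shellRadius i < 3 * radius i
  radius_mul_card_le :
    ∀ i, radius i * #(distSphere G i (shellRadius i)) ≤ #(distBall G i (3 * radius i))

namespace BallClustering

variable [Fintype V] {A r M : ℕ}

theorem nonempty (hG : G.Connected) {L : ℕ} (hr : 0 < r) (hA : Fintype.card V < A ^ L) :
    Nonempty (BallClustering G A r (r * 12 ^ L)) := by
  choose R le_R R_le card_le using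
    exists_scale_card_distBall_mul_le G (b := 12) (by norm_num) hA r
  choose ρ le_ρ ρ_lt thin using
    fun v => exists_card_distSphere_mul_le G v (2 * R v) (hr.trans_le (le_R v))
  obtain ⟨I, disjoint, cover⟩ := exists_pairwiseDisjoint_distBall_cover hG R
  have three_mul (v : V) : 2 * R v + R v = 3 * R v := by ring
  exact ⟨{
    centers := I
    radius := R
    shellRadius := ρ
    le_radius := le_R
    radius_le := R_le
    card_distBall_le := card_le
    pairwiseDisjoint := disjoint
    exists_dist_le := cover
    two_mul_radius_le := le_ρ
    shellRadius_lt := fun v => three_mul v ▸ ρ_lt v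
    radius_mul_card_le := fun v => three_mul v ▸ thin v }⟩

variable (𝒞 : BallClustering G A r M)

/-- The disjoint inner balls of a clustering. -/
noncomputable def core (i : V) : Finset V := distBall G i (𝒞.radius i)

/-- The thin sphere through which a geodesic leaves the cluster of `i`. -/
noncomputable def shell (i : V) : Finset V := distSphere G i (𝒞.shellRadius i)

/-- The centers close to `i` whose cluster is no larger than that of `i`, so that it lies in a
slight enlargement of the latter. -/
noncomputable def smallerNeighbors (i : V) : Finset V :=
  {j ∈ 𝒞.centers | 𝒞.radius j ≤ 𝒞.radius i ∧ G.dist i j ≤ 5 * 𝒞.radius i}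

theorem mem_core {i x : V} : x ∈ 𝒞.core i ↔ G.dist i x ≤ 𝒞.radius i := mem_distBall

theorem mem_shell {i x : V} : x ∈ 𝒞.shell i ↔ G.dist i x = 𝒞.shellRadius i := mem_distSphere

theorem radius_pos (i : V) : 0 < 𝒞.radius i := by
  have := 𝒞.two_mul_radius_le i
  have := 𝒞.shellRadius_lt i
  lia

theorem dist_lt_of_mem_shell {i x : V} (hx : x ∈ 𝒞.shell i) : G.dist i x < 3 * 𝒞.radius i :=
  (𝒞.mem_shell.1 hx).trans_lt (𝒞.shellRadius_lt i)

theorem card_distBall_three_mul_le (i : V) :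
    #(distBall G i (3 * 𝒞.radius i)) ≤ A * #(𝒞.core i) :=
  (card_le_card (distBall_mono (by lia))).trans (𝒞.card_distBall_le i)

theorem radius_mul_card_shell_le (i : V) : 𝒞.radius i * #(𝒞.shell i) ≤ A * #(𝒞.core i) :=
  (𝒞.radius_mul_card_le i).trans (𝒞.card_distBall_three_mul_le i)

theorem card_biUnion_core [DecidableEq V] {J : Finset V} (hJ : J ⊆ 𝒞.centers) :
    #(J.biUnion 𝒞.core) = ∑ i ∈ J, #(𝒞.core i) :=
  card_biUnion (𝒞.pairwiseDisjoint.subset (coe_subset.2 hJ))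

theorem card_biUnion_le_mul_card {β : Type*} [DecidableEq β] {J : Finset V} (hJ : J ⊆ 𝒞.centers)
    {F : V → Finset β} {B : ℕ} (hF : ∀ i ∈ J, #(F i) ≤ B * #(𝒞.core i)) :
    #(J.biUnion F) ≤ B * Fintype.card V := by
  classical
  calc #(J.biUnion F) ≤ ∑ i ∈ J, #(F i) := card_biUnion_le
    _ ≤ ∑ i ∈ J, B * #(𝒞.core i) := sum_le_sum hF
    _ = B * #(J.biUnion 𝒞.core) := by rw [← mul_sum, 𝒞.card_biUnion_core hJ]
    _ ≤ B * Fintype.card V := by gcongr; exact card_le_univ _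

theorem mul_card_biUnion_shell_le [DecidableEq V] (hG : G.Connected) (i : V) :
    r * #((𝒞.smallerNeighbors i).biUnion 𝒞.shell) ≤ A ^ 2 * #(𝒞.core i) := by
  have cores_subset : (𝒞.smallerNeighbors i).biUnion 𝒞.core ⊆ distBall G i (12 * 𝒞.radius i) := by
    intro x hx
    obtain ⟨j, hj, hxj⟩ := mem_biUnion.1 hx
    obtain ⟨-, radius_le, dist_le⟩ := mem_filter.1 hj
    have dist_jx := 𝒞.mem_core.1 hxj
    have triangle := hG.dist_triangle (u := i) (v := j) (w := x)
    exact mem_distBall.2 (by lia)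
  calc r * #((𝒞.smallerNeighbors i).biUnion 𝒞.shell)
      ≤ r * ∑ j ∈ 𝒞.smallerNeighbors i, #(𝒞.shell j) := by gcongr; exact card_biUnion_le
    _ ≤ ∑ j ∈ 𝒞.smallerNeighbors i, A * #(𝒞.core j) := by
      rw [mul_sum]
      exact sum_le_sum fun j _ =>
        (Nat.mul_le_mul_right _ (𝒞.le_radius j)).trans (𝒞.radius_mul_card_shell_le j)
    _ = A * #((𝒞.smallerNeighbors i).biUnion 𝒞.core) := by
      rw [← mul_sum, smallerNeighbors, 𝒞.card_biUnion_core (filter_subset _ _)]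
    _ ≤ A * (A * #(𝒞.core i)) := by
      gcongr
      exact (card_le_card cores_subset).trans (𝒞.card_distBall_le i)
    _ = A ^ 2 * #(𝒞.core i) := by ring

end BallClustering

end Clustering

section Transit

namespace BallClustering

variable [Fintype V] {A r M : ℕ} (𝒞 : BallClustering G A r M)

/-- The cost of crossing the cluster of `i` when clusters are served by emulators of error `h`:
small clusters, those whose core has at most `r ^ 2` vertices, are crossed for free. -/
noncomputable def crossingError (h : ℕ → ℕ) (i : V) : ℕ :=
  if #(𝒞.core i) ≤ r ^ 2 then 0 else h #(distBall G i (12 * 𝒞.radius i))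

/-- The edges `E` carry one from the shell of `i` to the shell of any cluster `j` that touches the
starting vertex, with additive error `err i + err j`. -/
def TransitsWithin (E : Finset (Sym2 V)) (err : V → ℕ) : Prop :=
  ∀ i ∈ 𝒞.centers, ∀ j ∈ 𝒞.centers, ∀ x ∈ 𝒞.shell i, ∀ y ∈ 𝒞.shell j,
    G.dist j x ≤ 2 * 𝒞.radius j + 1 → JoinedWithin G E x y (G.dist x y + (err i + err j))

theorem mul_crossingError_le {h : ℕ → ℕ} {T K : ℕ}
    (hT : ∀ k, r ^ 2 < k → k ≤ Fintype.card V → T * h k ≤ K * k) (i : V) :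
    T * 𝒞.crossingError h i ≤ A * K * #(𝒞.core i) := by
  by_cases small : #(𝒞.core i) ≤ r ^ 2
  · simp [crossingError, small]
  · have core_le : #(𝒞.core i) ≤ #(distBall G i (12 * 𝒞.radius i)) :=
      card_le_card (distBall_mono (by lia))
    rw [crossingError, if_neg small]
    calc T * h #(distBall G i (12 * 𝒞.radius i)) ≤ K * #(distBall G i (12 * 𝒞.radius i)) :=
        hT _ (by lia) (card_le_univ _)
      _ ≤ K * (A * #(𝒞.core i)) := by gcongr; exact 𝒞.card_distBall_le i
      _ = A * K * #(𝒞.core i) := by ring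

variable [DecidableEq V] {E : Finset (Sym2 V)} {i j x y : V}

/-- The edges between each center and all vertices of its cluster. -/
noncomputable def starEdges : Finset (Sym2 V) :=
  𝒞.centers.biUnion fun i => (distBall G i (3 * 𝒞.radius i)).image fun x => s(i, x)

/-- The complete bipartite graphs between the shell of a small cluster and the shells near it.
The shell of a small cluster is so thin that these graphs are affordable. -/
noncomputable def shellEdges : Finset (Sym2 V) :=
  {i ∈ 𝒞.centers | #(𝒞.core i) ≤ r ^ 2}.biUnion fun i =>
    image₂ (fun x y => s(x, y)) (𝒞.shell i) ((𝒞.smallerNeighbors i).biUnion 𝒞.shell)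

theorem card_starEdges_le : #𝒞.starEdges ≤ A * Fintype.card V :=
  𝒞.card_biUnion_le_mul_card Subset.rfl fun i _ =>
    card_image_le.trans (𝒞.card_distBall_three_mul_le i)

theorem joinedWithin_of_starEdges_subset (hE : 𝒞.starEdges ⊆ E) (hi : i ∈ 𝒞.centers)
    (hx : G.dist i x ≤ 3 * 𝒞.radius i) : JoinedWithin G E i x (3 * M) := by
  have mem_E : s(i, x) ∈ E :=
    hE (mem_biUnion.2 ⟨i, hi, mem_image_of_mem _ (mem_distBall.2 hx)⟩)
  exact (JoinedWithin.of_mem mem_E).mono (hx.trans (Nat.mul_le_mul_left 3 (𝒞.radius_le i)))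

theorem card_shellEdges_le (hG : G.Connected) (hr : 0 < r) :
    #𝒞.shellEdges ≤ A ^ 3 * Fintype.card V := by
  refine 𝒞.card_biUnion_le_mul_card (filter_subset _ _) fun i hi => ?_
  have small := (mem_filter.1 hi).2
  set W := (𝒞.smallerNeighbors i).biUnion 𝒞.shell
  have card_shell : r * #(𝒞.shell i) ≤ A * #(𝒞.core i) :=
    (Nat.mul_le_mul_right _ (𝒞.le_radius i)).trans (𝒞.radius_mul_card_shell_le i)
  have card_product : r ^ 2 * (#(𝒞.shell i) * #W) ≤ r ^ 2 * (A ^ 3 * #(𝒞.core i)) :=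
    calc r ^ 2 * (#(𝒞.shell i) * #W) = r * #(𝒞.shell i) * (r * #W) := by ring
      _ ≤ A * #(𝒞.core i) * (A ^ 2 * #(𝒞.core i)) :=
        Nat.mul_le_mul card_shell (𝒞.mul_card_biUnion_shell_le hG i)
      _ = A ^ 3 * #(𝒞.core i) * #(𝒞.core i) := by ring
      _ ≤ A ^ 3 * #(𝒞.core i) * r ^ 2 := by gcongr
      _ = r ^ 2 * (A ^ 3 * #(𝒞.core i)) := by ring
  exact (card_image₂_le _ _ _).trans (Nat.le_of_mul_le_mul_left card_product (by positivity))

theorem joinedWithin_of_shellEdges_subset (hE : 𝒞.shellEdges ⊆ E) (hi : i ∈ 𝒞.centers)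
    (small : #(𝒞.core i) ≤ r ^ 2) (hj : j ∈ 𝒞.smallerNeighbors i) (hx : x ∈ 𝒞.shell i)
    (hy : y ∈ 𝒞.shell j) : JoinedWithin G E x y (G.dist x y) :=
  .of_mem <| hE <| mem_biUnion.2
    ⟨i, mem_filter.2 ⟨hi, small⟩, mem_image₂_of_mem hx (mem_biUnion.2 ⟨j, hj, hy⟩)⟩

theorem joinedWithin_of_smallerNeighbor {h : ℕ → ℕ} {Eloc : V → Finset (Sym2 V)}
    (joined : ∀ i x y, G.dist i x + G.dist i y ≤ 12 * 𝒞.radius i →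
      JoinedWithin G (Eloc i) x y (G.dist x y + h #(distBall G i (12 * 𝒞.radius i))))
    (hE : 𝒞.shellEdges ∪ 𝒞.centers.biUnion Eloc ⊆ E) (hi : i ∈ 𝒞.centers)
    (hj : j ∈ 𝒞.smallerNeighbors i) (hx : x ∈ 𝒞.shell i) (hy : y ∈ 𝒞.shell j)
    (hxy : G.dist i x + G.dist i y ≤ 12 * 𝒞.radius i) :
    JoinedWithin G E x y (G.dist x y + 𝒞.crossingError h i) := by
  by_cases small : #(𝒞.core i) ≤ r ^ 2
  · exact (𝒞.joinedWithin_of_shellEdges_subset (union_subset_left hE) hi small hj hx hy).mono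
      (Nat.le_add_right _ _)
  · rw [crossingError, if_neg small]
    exact (joined i x y hxy).mono_edges
      ((subset_biUnion_of_mem Eloc hi).trans (union_subset_right hE))

theorem exists_transitsWithin (hG : G.Connected) (hr : 0 < r) {C : ℕ} {h : ℕ → ℕ}
    (hh : HasSparseEmulators.{u} C h) :
    ∃ E : Finset (Sym2 V), #E ≤ (A + A ^ 3 + C * A) * Fintype.card V ∧ 𝒞.starEdges ⊆ E ∧
      𝒞.TransitsWithin E (𝒞.crossingError h) := by
  choose Eloc card_Eloc joined using fun i => hh.exists_distBall hG i (12 * 𝒞.radius i)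
  have card_local : #(𝒞.centers.biUnion Eloc) ≤ C * A * Fintype.card V :=
    𝒞.card_biUnion_le_mul_card Subset.rfl fun i _ =>
      ((card_Eloc i).trans (Nat.mul_le_mul_left C (𝒞.card_distBall_le i))).trans_eq (by
        rw [mul_assoc]; rfl)
  refine ⟨𝒞.starEdges ∪ (𝒞.shellEdges ∪ 𝒞.centers.biUnion Eloc), ?_, subset_union_left,
    fun i hi j hj x hx y hy hjx => ?_⟩
  · have card_star := 𝒞.card_starEdges_le
    have card_shell := 𝒞.card_shellEdges_le hG hr
    grw [card_union_le, card_union_le, card_star, card_shell, card_local]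
    exact (by ring : _ = _).le
  · have dist_ix := 𝒞.dist_lt_of_mem_shell hx
    have dist_jy := 𝒞.dist_lt_of_mem_shell hy
    have dist_ij := hG.dist_triangle (u := i) (v := x) (w := j)
    have dist_iy := hG.dist_triangle (u := i) (v := j) (w := y)
    rw [dist_comm (u := x)] at dist_ij
    obtain hle | hlt := le_or_gt (𝒞.radius j) (𝒞.radius i)
    · exact (𝒞.joinedWithin_of_smallerNeighbor joined subset_union_right hi
        (mem_filter.2 ⟨hj, hle, by lia⟩) hx hy (by lia)).mono (by lia)
    · rw [dist_comm]
      exact (𝒞.joinedWithin_of_smallerNeighbor joined subset_union_right hj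
        (mem_filter.2 ⟨hi, hlt.le, by rw [dist_comm]; lia⟩) hy hx (by lia)).symm.mono (by lia)

end BallClustering

end Transit

section HittingSet

variable {α : Type*} [Fintype α] [Nonempty α] {𝓕 : Finset (Finset α)} {T : ℕ}

theorem exists_mul_card_le_card_mul_card_filter_mem [DecidableEq α] (hT : ∀ F ∈ 𝓕, T ≤ #F) :
    ∃ v, T * #𝓕 ≤ Fintype.card α * #{F ∈ 𝓕 | v ∈ F} := by
  have double_count : ∑ v : α, #{F ∈ 𝓕 | v ∈ F} = ∑ F ∈ 𝓕, #F := by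
    simpa [bipartiteAbove, bipartiteBelow] using
      sum_card_bipartiteAbove_eq_sum_card_bipartiteBelow (s := univ) (t := 𝓕)
        (fun (v : α) F => v ∈ F)
  have sum_le : ∑ _v : α, T * #𝓕 ≤ ∑ v : α, Fintype.card α * #{F ∈ 𝓕 | v ∈ F} := by
    rw [sum_const, smul_eq_mul, card_univ, ← mul_sum, double_count, mul_comm T]
    exact Nat.mul_le_mul_left _ (card_nsmul_le_sum 𝓕 card T hT)
  obtain ⟨v, -, hv⟩ := exists_le_of_sum_le univ_nonempty sum_le
  exact ⟨v, hv⟩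

theorem exists_card_filter_disjoint_le [DecidableEq α] (hT : ∀ F ∈ 𝓕, T ≤ #F) (m : ℕ) :
    ∃ P : Finset α, #P ≤ m ∧
      (#{F ∈ 𝓕 | Disjoint F P} : ℝ) ≤ #𝓕 * Real.exp (-(T * m / Fintype.card α)) := by
  induction m with
  | zero => exact ⟨∅, by simp, by simp⟩
  | succ m ih =>
    obtain ⟨P, card_P, card_missed⟩ := ih
    set Q := {F ∈ 𝓕 | Disjoint F P}
    set θ : ℝ := T / Fintype.card α with hθ
    obtain ⟨v, hv⟩ := exists_mul_card_le_card_mul_card_filter_mem (𝓕 := Q) (T := T)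
      fun F hF => hT F (mem_filter.1 hF).1
    have hit : θ * #Q ≤ #{F ∈ Q | v ∈ F} := by
      rw [hθ, div_mul_eq_mul_div, div_le_iff₀' (mod_cast Fintype.card_pos)]
      exact_mod_cast hv
    have split : (#{F ∈ Q | v ∈ F} : ℝ) + #{F ∈ 𝓕 | Disjoint F (insert v P)} = #Q := by
      simp only [disjoint_insert_right, and_comm (a := v ∉ _), ← filter_filter]
      exact_mod_cast card_filter_add_card_filter_not (s := Q) (v ∈ ·)
    refine ⟨insert v P, (card_insert_le _ _).trans (by lia), ?_⟩
    calc (#{F ∈ 𝓕 | Disjoint F (insert v P)} : ℝ) ≤ (1 - θ) * #Q := by linarith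
      _ ≤ Real.exp (-θ) * (#𝓕 * Real.exp (-(T * m / Fintype.card α))) := by
        gcongr
        exact Real.one_sub_le_exp_neg θ
      _ = #𝓕 * Real.exp (-(T * (m + 1 : ℕ) / Fintype.card α)) := by
        rw [mul_left_comm, ← Real.exp_add, hθ]
        push_cast
        ring_nf

theorem exists_hitting_set (hT : ∀ F ∈ 𝓕, T ≤ #F) {m : ℕ}
    (hm : #𝓕 * Real.exp (-(T * m / Fintype.card α)) < 1) :
    ∃ P : Finset α, #P ≤ m ∧ ∀ F ∈ 𝓕, ¬Disjoint F P := by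
  classical
  obtain ⟨P, card_P, card_missed⟩ := exists_card_filter_disjoint_le hT m
  have no_missed : #{F ∈ 𝓕 | Disjoint F P} = 0 :=
    Nat.lt_one_iff.1 (mod_cast card_missed.trans_lt hm)
  exact ⟨P, card_P, fun F hF hdisj =>
    notMem_empty F (card_eq_zero.1 no_missed ▸ mem_filter.2 ⟨hF, hdisj⟩)⟩

end HittingSet

section Itinerary

theorem exists_chain {next : ℕ → ℕ} {D : ℕ} (le_next : ∀ k ≤ D, k ≤ next k)
    (next_le : ∀ k ≤ D, next k ≤ D) :
    ∃ (q : ℕ) (b : ℕ → ℕ), b 0 = 0 ∧ next (b q) = D ∧ (∀ l ≤ q, b l ≤ D) ∧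
      (∀ l, b (l + 1) = next (b l) + 1) ∧ ∀ l l', l < l' → l' ≤ q → next (b l) < b l' := by
  let b (l : ℕ) : ℕ := (fun k => next k + 1)^[l] 0
  have b_succ (l : ℕ) : b (l + 1) = next (b l) + 1 := Function.iterate_succ_apply' _ _ _
  have b_le (q : ℕ) (hq : ∀ l < q, next (b l) ≠ D) : b q ≤ D := by
    induction q with
    | zero => exact Nat.zero_le D
    | succ q ih =>
      have next_le_D := next_le _ (ih fun l hl => hq l (by lia))
      have next_ne_D := hq q (by lia)
      rw [b_succ]
      lia
  have reaches : ∃ q, next (b q) = D := by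
    by_contra! never
    have le_b (l : ℕ) : l ≤ b l := by
      induction l with
      | zero => exact Nat.zero_le _
      | succ l ih =>
        have := le_next (b l) (b_le l fun l _ => never l)
        rw [b_succ]
        lia
    exact (le_b (D + 1)).not_gt (Nat.lt_succ_of_le (b_le (D + 1) fun l _ => never l))
  classical
  have b_le_of_le (l : ℕ) (hl : l ≤ Nat.find reaches) : b l ≤ D :=
    b_le l fun k hk => Nat.find_min reaches (hk.trans_le hl)
  refine ⟨Nat.find reaches, b, rfl, Nat.find_spec reaches, b_le_of_le, b_succ, fun l l' hl hq => ?_⟩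
  induction l', hl using Nat.le_induction with
  | base => rw [b_succ]; lia
  | succ l' _ ih =>
    have := ih (by lia)
    have := le_next (b l') (b_le_of_le l' (by lia))
    rw [b_succ]
    lia

theorem exists_greedy_decomposition (P : ℕ → ℕ → Prop) (D : ℕ) (hP : ∀ k, P k k) :
    ∃ (q : ℕ) (b e : ℕ → ℕ), b 0 = 0 ∧ e q = D ∧ (∀ l, b (l + 1) = e l + 1) ∧
      (∀ l ≤ q, b l ≤ D ∧ P (b l) (e l)) ∧ (∀ l l', l ≤ l' → l' ≤ q → e l ≤ e l') ∧
      ∀ l l', l < l' → l' ≤ q → ¬P (b l) (b l') := by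
  classical
  let next (k : ℕ) : ℕ := Nat.findGreatest (P k) D
  have le_next (k : ℕ) (hk : k ≤ D) : k ≤ next k := Nat.le_findGreatest hk (hP k)
  obtain ⟨q, b, b_zero, next_b, b_le, b_succ, next_lt⟩ :=
    exists_chain le_next fun _ _ => Nat.findGreatest_le D
  refine ⟨q, b, fun l => next (b l), b_zero, next_b, b_succ, fun l hl => ?_, fun l l' hl hq => ?_,
    fun l l' hl hq => ?_⟩
  · exact ⟨b_le l hl, Nat.findGreatest_spec (b_le l hl) (hP _)⟩
  · obtain rfl | hlt := hl.eq_or_lt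
    · rfl
    · exact (next_lt l l' hlt hq).le.trans (le_next _ (b_le l' hq))
  · exact Nat.findGreatest_is_greatest (next_lt l l' hl hq) (b_le l' hq)

namespace BallClustering

variable [Fintype V] {A r M : ℕ} (𝒞 : BallClustering G A r M)

/-- The trace of a geodesic from `s` to `t` in a clustering: it runs through the clusters of
`center 0, …, center length`, leaving the `l`-th one for good at `exit l`, in its shell; the last
exit is `t` itself. -/
structure Itinerary (s t : V) where
  length : ℕ
  center : ℕ → V
  exit : ℕ → V
  center_mem : ∀ l, center l ∈ 𝒞.centers
  center_ne : ∀ l l', l < l' → l' ≤ length → center l ≠ center l'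
  dist_start_le : G.dist (center 0) s ≤ 2 * 𝒞.radius (center 0)
  exit_length : exit length = t
  dist_exit_le : ∀ l ≤ length, G.dist (center l) (exit l) ≤ 𝒞.shellRadius (center l)
  exit_mem_shell : ∀ l < length, exit l ∈ 𝒞.shell (center l)
  dist_next_le : ∀ l < length,
    G.dist (center (l + 1)) (exit l) ≤ 2 * 𝒞.radius (center (l + 1)) + 1
  dist_add_dist : ∀ l l', l ≤ l' → l' ≤ length →
    G.dist s (exit l) + G.dist (exit l) (exit l') = G.dist s (exit l')

theorem nonempty_itinerary (hG : G.Connected) (s t : V) : Nonempty (𝒞.Itinerary s t) := by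
  obtain ⟨f, f_zero, f_dist, geodesic⟩ := exists_geodesic hG s t
  choose cov cov_mem dist_cov using 𝒞.exists_dist_le
  have dist_cov_le (x : V) : G.dist (cov x) x ≤ 𝒞.shellRadius (cov x) :=
    (dist_cov x).trans (𝒞.two_mul_radius_le _)
  obtain ⟨q, b, e, b_zero, e_q, b_succ, inside, e_mono, outside⟩ := exists_greedy_decomposition
    (fun k j => G.dist (cov (f k)) (f j) ≤ 𝒞.shellRadius (cov (f k))) (G.dist s t)
    fun k => dist_cov_le (f k)
  have e_le (l : ℕ) (hl : l ≤ q) : e l ≤ G.dist s t := e_q ▸ e_mono l q hl le_rfl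
  have dist_step (l : ℕ) (hl : l < q) : G.dist (f (b (l + 1))) (f (e l)) = 1 := by
    have step := geodesic (e l) (b (l + 1)) (by grind) (inside (l + 1) hl).1
    rw [b_succ, Nat.add_left_cancel_iff] at step
    rw [b_succ, dist_comm, step]
  refine ⟨{
    length := q
    center := fun l => cov (f (b l))
    exit := fun l => f (e l)
    center_mem := fun l => cov_mem _
    center_ne := fun l l' hl hq heq => outside l l' hl hq (heq ▸ dist_cov_le (f (b l')))
    dist_start_le := by rw [b_zero, f_zero]; exact dist_cov s
    exit_length := by rw [e_q, f_dist]
    dist_exit_le := fun l hl => (inside l hl).2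
    exit_mem_shell := fun l hl => 𝒞.mem_shell.2 ((inside l hl.le).2.antisymm ?_)
    dist_next_le := fun l hl => ?_
    dist_add_dist := fun l l' hl hq => ?_ }⟩
  · have dist_gt := outside l (l + 1) l.lt_succ_self hl
    have triangle := hG.dist_triangle (u := cov (f (b l))) (v := f (e l)) (w := f (b (l + 1)))
    rw [dist_comm (u := f (e l)), dist_step l hl] at triangle
    lia
  · have triangle := hG.dist_triangle (u := cov (f (b (l + 1)))) (v := f (b (l + 1))) (w := f (e l))
    rw [dist_step l hl] at triangle
    exact triangle.trans (Nat.add_le_add_right (dist_cov _) 1)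
  · have to_exit (k : ℕ) (hk : k ≤ q) : G.dist s (f (e k)) = e k := by
      simpa [f_zero] using geodesic 0 (e k) (Nat.zero_le _) (e_le k hk)
    rw [to_exit l (hl.trans hq), to_exit l' hq]
    exact geodesic (e l) (e l') (e_mono l l' hl hq) (e_le l' hq)

theorem Itinerary.injOn_center {s t : V} (π : 𝒞.Itinerary s t) :
    Set.InjOn π.center (Set.Iic π.length) := by
  intro l hl l' hl' heq
  obtain hlt | rfl | hlt := lt_trichotomy l l'
  · exact absurd heq (π.center_ne l l' hlt hl')
  · rfl
  · exact absurd heq.symm (π.center_ne l' l hlt hl)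

end BallClustering

end Itinerary

section Routing

theorem exists_heavy_head_tail_of_two_mul_le_sum {w : ℕ → ℕ} {q T : ℕ}
    (hT : 2 * T ≤ ∑ l ∈ range (q + 1), w l) :
    ∃ a b, a ≤ b ∧ b ≤ q ∧ T ≤ ∑ l ∈ range (a + 1), w l ∧ ∑ l ∈ range a, w l ≤ T ∧
      T ≤ ∑ l ∈ Ico b (q + 1), w l ∧ ∑ l ∈ Ico (b + 1) (q + 1), w l ≤ T := by
  classical
  have heavy : ∃ a, T ≤ ∑ l ∈ range (a + 1), w l := ⟨q, by lia⟩
  set a := Nat.find heavy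
  have a_le : a ≤ q := Nat.find_min' heavy (by lia)
  have head_le : ∑ l ∈ range a, w l ≤ T := by
    obtain a_eq | ⟨k, a_eq⟩ : a = 0 ∨ ∃ k, a = k + 1 := by cases a <;> simp
    · simp [a_eq]
    · rw [a_eq]
      exact (not_le.1 (Nat.find_min heavy (by lia))).le
  have tail_ge : T ≤ ∑ l ∈ Ico a (q + 1), w l := by
    have split := sum_range_add_sum_Ico w (a_le.trans q.le_succ)
    lia
  let isHeavyTail (b : ℕ) : Prop := T ≤ ∑ l ∈ Ico b (q + 1), w l
  set b := Nat.findGreatest isHeavyTail q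
  have b_le : b ≤ q := Nat.findGreatest_le q
  refine ⟨a, b, Nat.le_findGreatest a_le tail_ge, b_le, Nat.find_spec heavy, head_le,
    Nat.findGreatest_spec (P := isHeavyTail) a_le tail_ge, ?_⟩
  obtain b_eq | b_lt := b_le.eq_or_lt
  · simp [b_eq]
  · exact (not_le.1 (Nat.findGreatest_is_greatest (P := isHeavyTail) b.lt_succ_self b_lt)).le

namespace BallClustering

variable [Fintype V] {A r M : ℕ} {𝒞 : BallClustering G A r M} {s t : V} (π : 𝒞.Itinerary s t)
  {E : Finset (Sym2 V)} {err : V → ℕ}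

namespace Itinerary

theorem dist_add_dist_add_dist {a b : ℕ} (hab : a ≤ b) (hb : b ≤ π.length) :
    G.dist s (π.exit a) + G.dist (π.exit a) (π.exit b) + G.dist (π.exit b) t = G.dist s t := by
  have additive := π.dist_add_dist a b hab hb
  have additive_end := π.dist_add_dist b π.length hb le_rfl
  rw [π.exit_length] at additive_end
  lia

theorem joinedWithin_exit (transit : 𝒞.TransitsWithin E err) {l l' : ℕ} (hl : l ≤ l')
    (hq : l' < π.length) :
    JoinedWithin G E (π.exit l) (π.exit l') (G.dist (π.exit l) (π.exit l') +
      (2 * ∑ k ∈ Ico l l', err (π.center k) + err (π.center l'))) := by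
  induction l', hl using Nat.le_induction with
  | base => exact .refl ..
  | succ l' hl ih =>
    have step := transit _ (π.center_mem l') _ (π.center_mem (l' + 1)) _
      (π.exit_mem_shell l' (by lia)) _ (π.exit_mem_shell (l' + 1) hq) (π.dist_next_le l' (by lia))
    have additive := π.dist_add_dist l l' hl (by lia)
    have additive_succ := π.dist_add_dist l (l' + 1) (by lia) hq.le
    have additive_step := π.dist_add_dist l' (l' + 1) (by lia) hq.le
    refine ((ih (by lia)).trans step).mono ?_
    rw [sum_Ico_succ_top hl]
    lia

theorem dist_exit_le_three_mul {l : ℕ} (hl : l ≤ π.length) :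
    G.dist (π.center l) (π.exit l) ≤ 3 * 𝒞.radius (π.center l) :=
  (π.dist_exit_le l hl).trans (𝒞.shellRadius_lt _).le

theorem sum_err_le {T K : ℕ} (hT : 0 < T) (herr : ∀ i, T * err i ≤ K * #(𝒞.core i))
    {I : Finset ℕ} {c : ℕ} (hI : ∑ l ∈ I, #(𝒞.core (π.center l)) ≤ c * T) :
    ∑ l ∈ I, err (π.center l) ≤ c * K := by
  refine Nat.le_of_mul_le_mul_left ?_ hT
  calc T * ∑ l ∈ I, err (π.center l) ≤ ∑ l ∈ I, K * #(𝒞.core (π.center l)) := by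
        rw [mul_sum]; exact sum_le_sum fun l _ => herr _
    _ ≤ K * (c * T) := by rw [← mul_sum]; gcongr
    _ = T * (c * K) := by ring

variable [DecidableEq V]

theorem joinedWithin_center_exit (star : 𝒞.starEdges ⊆ E) {l : ℕ} (hl : l ≤ π.length) :
    JoinedWithin G E (π.center l) (π.exit l) (3 * M) :=
  𝒞.joinedWithin_of_starEdges_subset star (π.center_mem l) (π.dist_exit_le_three_mul hl)

theorem joinedWithin_exit_center_succ (star : 𝒞.starEdges ⊆ E) {l : ℕ} (hl : l < π.length) :
    JoinedWithin G E (π.exit l) (π.center (l + 1)) (3 * M) := by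
  have radius_pos := 𝒞.radius_pos (π.center (l + 1))
  have dist_le := π.dist_next_le l hl
  exact (𝒞.joinedWithin_of_starEdges_subset star (π.center_mem (l + 1)) (by lia)).symm

-- The star edges at the two ends avoid paying for crossing the clusters of `l` and `l'`, whose
-- crossing errors may be large.
theorem joinedWithin_center (star : 𝒞.starEdges ⊆ E) (transit : 𝒞.TransitsWithin E err)
    {l l' : ℕ} (hl : l ≤ l') (hq : l' ≤ π.length) :
    JoinedWithin G E (π.center l) (π.center l') (G.dist (π.exit l) (π.exit l') +
      (12 * M + 2 * ∑ k ∈ Ico (l + 1) l', err (π.center k))) := by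
  obtain rfl | hlt := hl.eq_or_lt
  · exact .refl ..
  have hop := (π.joinedWithin_center_exit star (by lia : l ≤ _)).trans
    (π.joinedWithin_exit_center_succ star (by lia : l < _))
  obtain rfl | hlt' := (Nat.succ_le_of_lt hlt).eq_or_lt
  · exact hop.mono (by lia)
  obtain ⟨p, rfl⟩ : ∃ p, l' = p + 1 := ⟨l' - 1, by lia⟩
  have arrive := π.joinedWithin_exit_center_succ star (by lia : p < _)
  have leave := π.joinedWithin_center_exit star (by lia : l + 1 ≤ _)
  have middle := π.joinedWithin_exit transit (by lia : l + 1 ≤ p) (by lia)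
  have additive := π.dist_add_dist l (p + 1) (by lia) hq
  have additive_hop := π.dist_add_dist l (l + 1) (by lia) (by lia)
  have additive_middle := π.dist_add_dist (l + 1) p (by lia) (by lia)
  have additive_arrive := π.dist_add_dist p (p + 1) (by lia) hq
  refine (((hop.trans leave).trans middle).trans arrive).mono ?_
  rw [sum_Ico_succ_top (by lia)]
  lia

theorem joinedWithin_start_center (star : 𝒞.starEdges ⊆ E) (transit : 𝒞.TransitsWithin E err)
    {l : ℕ} (hl : l ≤ π.length) :
    JoinedWithin G E s (π.center l) (G.dist s (π.exit l) +
      (15 * M + 2 * ∑ k ∈ range l, err (π.center k))) := by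
  have start : JoinedWithin G E s (π.center 0) (3 * M) :=
    (𝒞.joinedWithin_of_starEdges_subset star (π.center_mem 0)
      (π.dist_start_le.trans (by lia))).symm
  have additive := π.dist_add_dist 0 l (Nat.zero_le l) hl
  have sum_le : ∑ k ∈ Ico (0 + 1) l, err (π.center k) ≤ ∑ k ∈ range l, err (π.center k) :=
    sum_le_sum_of_subset fun k hk => mem_range.2 (mem_Ico.1 hk).2
  exact (start.trans (π.joinedWithin_center star transit (Nat.zero_le l) hl)).mono (by lia)

theorem joinedWithin_center_end (star : 𝒞.starEdges ⊆ E) (transit : 𝒞.TransitsWithin E err)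
    {l : ℕ} (hl : l ≤ π.length) :
    JoinedWithin G E (π.center l) t (G.dist (π.exit l) t +
      (15 * M + 2 * ∑ k ∈ Ico (l + 1) (π.length + 1), err (π.center k))) := by
  have route := (π.joinedWithin_center star transit hl le_rfl).trans
    (π.joinedWithin_center_exit star le_rfl)
  rw [π.exit_length] at route
  have sum_le : ∑ k ∈ Ico (l + 1) π.length, err (π.center k) ≤
      ∑ k ∈ Ico (l + 1) (π.length + 1), err (π.center k) :=
    sum_le_sum_of_subset (Ico_subset_Ico_right (by lia))
  exact route.mono (by lia)

/-- The vertices in the cores of the clusters visited at the times in `I`. -/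
noncomputable def visitedCores (I : Finset ℕ) : Finset V :=
  I.biUnion fun l => 𝒞.core (π.center l)

theorem card_visitedCores {I : Finset ℕ} (hI : ∀ l ∈ I, l ≤ π.length) :
    #(π.visitedCores I) = ∑ l ∈ I, #(𝒞.core (π.center l)) := by
  refine card_biUnion fun l hl l' hl' hne => ?_
  exact 𝒞.pairwiseDisjoint (π.center_mem l) (π.center_mem l')
    (π.injOn_center.ne (hI l hl) (hI l' hl') hne)

theorem exists_mem_core_of_not_disjoint {I : Finset ℕ} {P : Finset V}
    (h : ¬Disjoint (π.visitedCores I) P) : ∃ l ∈ I, ∃ z ∈ P, z ∈ 𝒞.core (π.center l) := by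
  obtain ⟨z, hz, hzP⟩ := not_disjoint_iff.1 h
  obtain ⟨l, hl, hzl⟩ := mem_biUnion.1 hz
  exact ⟨l, hl, z, hzP, hzl⟩

theorem joinedWithin_center_of_mem_sym2 (hG : G.Connected) (star : 𝒞.starEdges ⊆ E)
    {P : Finset V} (hP : P.sym2 ⊆ E) {a b : ℕ} (ha : a ≤ π.length) (hb : b ≤ π.length) {z z' : V}
    (hz : z ∈ P) (hz' : z' ∈ P) (hza : z ∈ 𝒞.core (π.center a)) (hzb : z' ∈ 𝒞.core (π.center b)) :
    JoinedWithin G E (π.center a) (π.center b) (G.dist (π.exit a) (π.exit b) + 14 * M) := by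
  have dist_az := 𝒞.mem_core.1 hza
  have dist_bz := 𝒞.mem_core.1 hzb
  have exit_a := π.dist_exit_le_three_mul ha
  have exit_b := π.dist_exit_le_three_mul hb
  have radius_a := 𝒞.radius_le (π.center a)
  have radius_b := 𝒞.radius_le (π.center b)
  have dist_zz : G.dist z z' ≤ G.dist (π.exit a) (π.exit b) + 8 * M := by
    have via_a := hG.dist_triangle (u := z) (v := π.center a) (w := z')
    have via_exit_a := hG.dist_triangle (u := π.center a) (v := π.exit a) (w := z')
    have via_exit_b := hG.dist_triangle (u := π.exit a) (v := π.exit b) (w := z')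
    have via_b := hG.dist_triangle (u := π.exit b) (v := π.center b) (w := z')
    rw [dist_comm (u := z) (v := π.center a)] at via_a
    rw [dist_comm (u := π.exit b) (v := π.center b)] at via_b
    lia
  have to_z := 𝒞.joinedWithin_of_starEdges_subset star (x := z) (π.center_mem a) (by lia)
  have to_z' := 𝒞.joinedWithin_of_starEdges_subset star (x := z') (π.center_mem b) (by lia)
  have across : JoinedWithin G E z z' (G.dist z z') := .of_mem (hP (mk_mem_sym2_iff.2 ⟨hz, hz'⟩))
  exact ((to_z.trans across).trans to_z'.symm).mono (by lia)

variable {T K : ℕ}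

theorem joinedWithin_of_light (star : 𝒞.starEdges ⊆ E) (transit : 𝒞.TransitsWithin E err)
    (hT : 0 < T) (herr : ∀ i, T * err i ≤ K * #(𝒞.core i))
    (light : ∑ l ∈ range (π.length + 1), #(𝒞.core (π.center l)) ≤ 2 * T) :
    JoinedWithin G E s t (G.dist s t + (30 * M + 4 * K)) := by
  have err_le := π.sum_err_le hT herr light
  rw [sum_range_succ] at err_le
  have route := (π.joinedWithin_start_center star transit le_rfl).trans
    (π.joinedWithin_center_end star transit le_rfl)
  have additive := π.dist_add_dist_add_dist le_rfl le_rfl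
  rw [dist_self] at additive
  rw [Ico_self, sum_empty] at route
  exact route.mono (by lia)

theorem joinedWithin_of_hubs (hG : G.Connected) (star : 𝒞.starEdges ⊆ E)
    (transit : 𝒞.TransitsWithin E err) (hT : 0 < T) (herr : ∀ i, T * err i ≤ K * #(𝒞.core i))
    {P : Finset V} (hP : P.sym2 ⊆ E) {a b : ℕ} (hab : a ≤ b) (hb : b ≤ π.length)
    (head_le : ∑ l ∈ range a, #(𝒞.core (π.center l)) ≤ T)
    (tail_le : ∑ l ∈ Ico (b + 1) (π.length + 1), #(𝒞.core (π.center l)) ≤ T)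
    (head_hub : ¬Disjoint (π.visitedCores (range (a + 1))) P)
    (tail_hub : ¬Disjoint (π.visitedCores (Ico b (π.length + 1))) P) :
    JoinedWithin G E s t (G.dist s t + (44 * M + 4 * K)) := by
  obtain ⟨l, hl, z, hz, hzl⟩ := π.exists_mem_core_of_not_disjoint head_hub
  obtain ⟨l', hl', z', hz', hzl'⟩ := π.exists_mem_core_of_not_disjoint tail_hub
  rw [mem_range] at hl
  rw [mem_Ico] at hl'
  have first := π.joinedWithin_start_center star transit (by lia : l ≤ _)
  have middle := π.joinedWithin_center_of_mem_sym2 hG star hP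
    (by lia : l ≤ _) (by lia : l' ≤ _) hz hz' hzl hzl'
  have last := π.joinedWithin_center_end star transit (by lia : l' ≤ _)
  have head_sum_le : ∑ k ∈ range l, #(𝒞.core (π.center k)) ≤ 1 * T := by
    rw [one_mul]
    exact (sum_le_sum_of_subset (range_subset_range.2 (by lia))).trans head_le
  have tail_sum_le : ∑ k ∈ Ico (l' + 1) (π.length + 1), #(𝒞.core (π.center k)) ≤ 1 * T := by
    rw [one_mul]
    exact (sum_le_sum_of_subset (Ico_subset_Ico_left (by lia))).trans tail_le
  have head_err := π.sum_err_le hT herr head_sum_le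
  have tail_err := π.sum_err_le hT herr tail_sum_le
  have additive := π.dist_add_dist_add_dist (by lia : l ≤ l') (by lia)
  exact ((first.trans middle).trans last).mono (by lia)

end Itinerary

variable [DecidableEq V] {T K : ℕ}

-- Either the clusters along a geodesic are light enough to cross all of them, or a hub in a heavy
-- initial segment and one in a heavy final segment shortcut the part in between.
theorem exists_family_joinedWithin_of_hitting (hG : G.Connected) (star : 𝒞.starEdges ⊆ E)
    (transit : 𝒞.TransitsWithin E err) (hT : 0 < T) (herr : ∀ i, T * err i ≤ K * #(𝒞.core i))
    (s t : V) :
    ∃ 𝒢 : Finset (Finset V), #𝒢 ≤ 2 ∧ (∀ F ∈ 𝒢, T ≤ #F) ∧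
      ∀ P : Finset V, (∀ F ∈ 𝒢, ¬Disjoint F P) →
        JoinedWithin G (E ∪ P.sym2) s t (G.dist s t + (44 * M + 4 * K)) := by
  have transit_union (P : Finset V) : 𝒞.TransitsWithin (E ∪ P.sym2) err :=
    fun i hi j hj x hx y hy hjx => (transit i hi j hj x hx y hy hjx).mono_edges subset_union_left
  have star_union (P : Finset V) : 𝒞.starEdges ⊆ E ∪ P.sym2 := star.trans subset_union_left
  obtain ⟨π⟩ := 𝒞.nonempty_itinerary hG s t
  obtain light | heavy := le_total (∑ l ∈ range (π.length + 1), #(𝒞.core (π.center l))) (2 * T)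
  · exact ⟨∅, by simp, by simp, fun P _ =>
      (π.joinedWithin_of_light (star_union P) (transit_union P) hT herr light).mono (by lia)⟩
  · obtain ⟨a, b, hab, hb, head_ge, head_le, tail_ge, tail_le⟩ :=
      exists_heavy_head_tail_of_two_mul_le_sum heavy
    refine ⟨{π.visitedCores (range (a + 1)), π.visitedCores (Ico b (π.length + 1))}, card_le_two,
      ?_, ?_⟩ <;>
    simp only [mem_insert, mem_singleton, forall_eq_or_imp, forall_eq]
    · rw [π.card_visitedCores (by simp; lia), π.card_visitedCores (by simp)]
      exact ⟨head_ge, tail_ge⟩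
    · exact fun P hP => π.joinedWithin_of_hubs hG (star_union P) (transit_union P) hT herr
        subset_union_right hab hb head_le tail_le hP.1 hP.2

end BallClustering

end Routing

section Recursion

theorem card_sym2_le_sq (P : Finset V) : #P.sym2 ≤ #P ^ 2 := by
  rw [card_sym2, Nat.choose_two_right, Nat.add_sub_cancel]
  exact Nat.div_le_of_le_mul (by nlinarith [Nat.le_self_pow two_ne_zero #P])

theorem HasSparseEmulators.exists_hasAdditiveError [Fintype V] {C : ℕ} {h : ℕ → ℕ}
    (hh : HasSparseEmulators.{u} C h) (hG : G.Connected) {A L r T K m : ℕ} (hr : 0 < r)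
    (hA : Fintype.card V < A ^ L) (hT : 0 < T)
    (hK : ∀ k, r ^ 2 < k → k ≤ Fintype.card V → T * h k ≤ K * k)
    (hm : 2 * (Fintype.card V : ℝ) ^ 2 * Real.exp (-(T * m / Fintype.card V)) < 1) :
    ∃ E : Finset (Sym2 V), #E ≤ (A + A ^ 3 + C * A) * Fintype.card V + m ^ 2 ∧
      HasAdditiveError G E (44 * (r * 12 ^ L) + 4 * (A * K)) := by
  classical
  have := hG.nonempty
  obtain ⟨𝒞⟩ := BallClustering.nonempty hG hr hA
  obtain ⟨E, card_E, star, transit⟩ := 𝒞.exists_transitsWithin hG hr hh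
  choose 𝒢 card_𝒢 le_card joined using
    BallClustering.exists_family_joinedWithin_of_hitting hG star transit hT
      (𝒞.mul_crossingError_le hK)
  let 𝓕 : Finset (Finset V) := univ.biUnion fun st : V × V => 𝒢 st.1 st.2
  have card_𝓕 : (#𝓕 : ℝ) ≤ 2 * (Fintype.card V : ℝ) ^ 2 := by
    have := card_biUnion_le_card_mul univ (fun st : V × V => 𝒢 st.1 st.2) 2
      fun st _ => card_𝒢 st.1 st.2
    rw [card_univ, Fintype.card_prod] at this
    exact_mod_cast this.trans_eq (by ring)
  obtain ⟨P, card_P, hits⟩ : ∃ P : Finset V, #P ≤ m ∧ ∀ F ∈ 𝓕, ¬Disjoint F P := by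
    refine exists_hitting_set (T := T) (fun F hF => ?_) (lt_of_le_of_lt (by gcongr) hm)
    obtain ⟨st, -, hF⟩ := mem_biUnion.1 hF
    exact le_card st.1 st.2 F hF
  refine ⟨E ∪ P.sym2, ?_, fun s t => joined s t P fun F hF =>
    hits F (mem_biUnion.2 ⟨(s, t), mem_univ _, hF⟩)⟩
  grw [card_union_le, card_E, card_sym2_le_sq, card_P]

end Recursion

section Exponents

theorem ceil_rpow_le_two_mul {N x : ℝ} (hN : 1 ≤ N) (hx : 0 ≤ x) : (⌈N ^ x⌉₊ : ℝ) ≤ 2 * N ^ x :=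
  Nat.ceil_le_two_mul (by linarith [Real.one_le_rpow hN hx])

theorem pow_log_pow_le_rpow {b k n : ℕ} (hk : k ≠ 0) (hn : n ≠ 0) :
    (b : ℝ) ^ Nat.log (b ^ k) n ≤ (n : ℝ) ^ (k : ℝ)⁻¹ := by
  rw [Real.le_rpow_inv_iff_of_pos (by positivity) (by positivity) (by positivity),
    Real.rpow_natCast, ← pow_mul, mul_comm, pow_mul]
  exact_mod_cast Nat.pow_log_le_self (b ^ k) hn

theorem ceil_rpow_mul_pow_log_le {b k n : ℕ} {x y : ℝ} (hn : 1 ≤ n) (hk : k ≠ 0) (hx : 0 ≤ x)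
    (hy : (k : ℝ)⁻¹ ≤ y) :
    (⌈(n : ℝ) ^ (x + y)⌉₊ * b ^ (Nat.log (b ^ k) n + 1) : ℝ) ≤ 2 * b * (n : ℝ) ^ (x + 2 * y) := by
  have one_le_n : (1 : ℝ) ≤ n := mod_cast hn
  have y_nonneg : 0 ≤ y := le_trans (by positivity) hy
  calc (⌈(n : ℝ) ^ (x + y)⌉₊ * b ^ (Nat.log (b ^ k) n + 1) : ℝ)
      ≤ 2 * (n : ℝ) ^ (x + y) * ((n : ℝ) ^ y * b) := by
        rw [pow_succ]
        grw [ceil_rpow_le_two_mul one_le_n (by positivity), pow_log_pow_le_rpow hk (by lia),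
          Real.rpow_le_rpow_of_exponent_le one_le_n hy]
    _ = 2 * b * (n : ℝ) ^ (x + 2 * y) := by
        rw [two_mul y, ← add_assoc, Real.rpow_add (by positivity) (x + y)]
        ring

theorem ceil_sqrt_sq_le (n : ℕ) : ⌈√(n : ℝ)⌉₊ ^ 2 ≤ 4 * n := by
  obtain rfl | hn := n.eq_zero_or_pos
  · simp
  have one_le_sqrt : 1 ≤ √(n : ℝ) := Real.one_le_sqrt.2 (mod_cast hn)
  have ceil_le : (⌈√(n : ℝ)⌉₊ : ℝ) ≤ 2 * √n := Nat.ceil_le_two_mul (by linarith)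
  suffices (⌈√(n : ℝ)⌉₊ : ℝ) ^ 2 ≤ 4 * n by exact_mod_cast this
  grw [ceil_le, mul_pow, Real.sq_sqrt n.cast_nonneg]
  norm_num

theorem rpow_one_add_le_ceil_mul_ceil_sqrt {N : ℝ} (hN : 0 < N) (δ : ℝ) :
    N ^ (1 + δ) ≤ ⌈N ^ (1 / 2 + δ)⌉₊ * ⌈√N⌉₊ := by
  calc N ^ (1 + δ) = N ^ (1 / 2 + δ) * √N := by
        rw [Real.sqrt_eq_rpow, ← Real.rpow_add hN]
        ring_nf
    _ ≤ ⌈N ^ (1 / 2 + δ)⌉₊ * ⌈√N⌉₊ := by gcongr <;> exact Nat.le_ceil _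

theorem two_mul_sq_mul_exp_lt_one {N δ x : ℝ} (hN : 1 ≤ N) (hδ : 0 < δ)
    (hx : (1 + 2 / δ) * N ^ (1 + δ) ≤ x) : 2 * N ^ 2 * Real.exp (-(x / N)) < 1 := by
  have N_pos : 0 < N := by linarith
  have log_le : 1 + 2 * Real.log N ≤ x / N :=
    calc 1 + 2 * Real.log N ≤ N ^ δ + 2 * (N ^ δ / δ) := by
          gcongr
          · exact Real.one_le_rpow hN hδ.le
          · exact Real.log_le_rpow_div N_pos.le hδ
      _ = (1 + 2 / δ) * N ^ (1 + δ) / N := by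
          rw [Real.rpow_add N_pos, Real.rpow_one]
          field
      _ ≤ x / N := by gcongr
  calc 2 * N ^ 2 * Real.exp (-(x / N)) = 2 * Real.exp (2 * Real.log N - x / N) := by
        rw [Real.exp_sub, two_mul (Real.log N), Real.exp_add, Real.exp_log N_pos, Real.exp_neg]
        ring
    _ ≤ 2 * Real.exp (-1) := by gcongr; linarith
    _ < 1 := by
        rw [Real.exp_neg, ← div_eq_mul_inv, div_lt_one (Real.exp_pos 1)]
        linarith [Real.exp_one_gt_d9]

theorem rpow_le_rpow_mul_of_sq_le {N a β δ k : ℝ} (hN : 0 < N) (ha : a ≤ 1) (hδ : 0 ≤ δ)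
    (hk : (N ^ β) ^ 2 ≤ k) (hkN : k ≤ N) : k ^ (a + δ) ≤ N ^ (δ + 2 * β * (a - 1)) * k := by
  have k_pos : 0 < k := lt_of_lt_of_le (by positivity) hk
  calc k ^ (a + δ) = k ^ δ * k ^ (a - 1) * k := by
        rw [← Real.rpow_add k_pos, ← Real.rpow_add_one k_pos.ne']
        ring_nf
    _ ≤ N ^ δ * ((N ^ β) ^ 2) ^ (a - 1) * k := by
        gcongr ?_ * ?_ * k
        · gcongr
        · exact Real.rpow_le_rpow_of_nonpos (by positivity) hk (by linarith)
    _ = N ^ (δ + 2 * β * (a - 1)) * k := by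
        rw [Real.rpow_add hN, Real.rpow_mul hN.le, mul_comm 2, Real.rpow_mul hN.le, Real.rpow_two]

/-- The error exponent of the recursion step, as a function of the exponent it starts from. -/
noncomputable def nextExponent (a : ℝ) : ℝ :=
  1 / (6 - 4 * a)

theorem nextExponent_pos {a : ℝ} (ha : a ≤ 1) : 0 < nextExponent a :=
  one_div_pos.2 (by linarith)

theorem nextExponent_mul {a : ℝ} (ha : a ≤ 1) : nextExponent a * (6 - 4 * a) = 1 :=
  one_div_mul_cancel (by linarith)

-- `nextExponent a` solves `2 * α * (a - 1) + 1 / 2 = α`, which balances the cluster radius `N ^ α`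
-- with the error accumulated while crossing clusters of total size `√N`.
theorem rpow_mul_rpow_nextExponent_le {N a δ : ℝ} (hN : 1 ≤ N) (ha : a ≤ 1) (hδ : 0 ≤ δ) :
    N ^ (1 / 2 + δ) * N ^ (δ + 2 * (nextExponent a + 2 * δ) * (a - 1)) ≤
      N ^ (nextExponent a + 4 * δ) := by
  rw [← Real.rpow_add (by linarith)]
  have defect_nonneg : 0 ≤ δ * (1 - a) := mul_nonneg hδ (sub_nonneg.2 ha)
  exact Real.rpow_le_rpow_of_exponent_le hN (by linarith [nextExponent_mul ha])

theorem aSeq_le_one (i : ℕ) : aSeq i ≤ 1 := by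
  induction i with
  | zero => exact le_rfl
  | succ i ih => exact (div_le_one (by linarith)).2 (by linarith)

end Exponents

section Achievable

/-- All connected graphs on `n` vertices have emulators with `O(n)` edges and additive error
`O(n ^ a)`. -/
def Achievable (a : ℝ) : Prop :=
  ∃ C D : ℕ, HasSparseEmulators.{u} C fun n => ⌊D * (n : ℝ) ^ a⌋₊

theorem hasSparseEmulators_one_two_mul : HasSparseEmulators.{u} 1 fun n => 2 * n := by
  classical
  intro V _ G hG
  obtain ⟨z⟩ := hG.nonempty
  refine ⟨univ.image fun x => s(z, x), card_image_le.trans (by simp), fun s t => ?_⟩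
  have toCenter (x : V) : JoinedWithin G (univ.image fun x => s(z, x)) z x (Fintype.card V) :=
    (JoinedWithin.of_mem (mem_image_of_mem _ (mem_univ x))).mono (dist_lt_card hG z x).le
  exact ((toCenter s).symm.trans (toCenter t)).mono (by lia)

theorem Achievable.of_one_le {a : ℝ} (ha : 1 ≤ a) : Achievable.{u} a := by
  refine ⟨1, 2, fun V _ G hG => ?_⟩
  obtain ⟨E, card_E, error_E⟩ := hasSparseEmulators_one_two_mul V G hG
  refine ⟨E, card_E, fun s t => (error_E s t).mono (Nat.add_le_add_left (Nat.le_floor ?_) _)⟩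
  have := hG.nonempty
  have one_le_card : (1 : ℝ) ≤ Fintype.card V := mod_cast Fintype.card_pos (α := V)
  push_cast
  gcongr
  exact Real.self_le_rpow_of_one_le one_le_card ha

theorem mul_floor_rpow_le {n c D k : ℕ} {a δ : ℝ} (hn : 1 ≤ n) (ha : a ≤ 1) (hδ : 0 ≤ δ)
    (hk : ⌈(n : ℝ) ^ (nextExponent a + 2 * δ)⌉₊ ^ 2 < k) (hkn : k ≤ n) :
    c * ⌈(n : ℝ) ^ (1 / 2 + δ)⌉₊ * ⌊D * (k : ℝ) ^ (a + δ)⌋₊ ≤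
      2 * c * D * ⌈(n : ℝ) ^ (nextExponent a + 4 * δ)⌉₊ * k := by
  have one_le_n : (1 : ℝ) ≤ n := mod_cast hn
  have sq_le_k : ((n : ℝ) ^ (nextExponent a + 2 * δ)) ^ 2 ≤ k := by
    have ceil_sq_lt : (⌈(n : ℝ) ^ (nextExponent a + 2 * δ)⌉₊ : ℝ) ^ 2 < k := mod_cast hk
    grw [← ceil_sq_lt, ← Nat.le_ceil]
  have rpow_le := rpow_le_rpow_mul_of_sq_le (by positivity) ha hδ sq_le_k (Nat.cast_le.2 hkn)
  have floor_le := Nat.floor_le (by positivity : 0 ≤ D * (k : ℝ) ^ (a + δ))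
  have ceil_le := ceil_rpow_le_two_mul one_le_n (by positivity : 0 ≤ 1 / 2 + δ)
  suffices (c * ⌈(n : ℝ) ^ (1 / 2 + δ)⌉₊ * ⌊D * (k : ℝ) ^ (a + δ)⌋₊ : ℝ) ≤
      2 * c * D * ⌈(n : ℝ) ^ (nextExponent a + 4 * δ)⌉₊ * k by exact_mod_cast this
  calc (c * ⌈(n : ℝ) ^ (1 / 2 + δ)⌉₊ * ⌊D * (k : ℝ) ^ (a + δ)⌋₊ : ℝ)
      ≤ c * (2 * (n : ℝ) ^ (1 / 2 + δ)) *
          (D * ((n : ℝ) ^ (δ + 2 * (nextExponent a + 2 * δ) * (a - 1)) * k)) := by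
        grw [ceil_le, floor_le, rpow_le]
    _ = 2 * c * D * ((n : ℝ) ^ (1 / 2 + δ) *
          (n : ℝ) ^ (δ + 2 * (nextExponent a + 2 * δ) * (a - 1))) * k := by ring
    _ ≤ 2 * c * D * ⌈(n : ℝ) ^ (nextExponent a + 4 * δ)⌉₊ * k := by
        grw [rpow_mul_rpow_nextExponent_le one_le_n ha hδ, ← Nat.le_ceil]

theorem HasSparseEmulators.nextExponent_add {C D k c : ℕ} {a δ : ℝ}
    (hh : HasSparseEmulators.{u} C fun n => ⌊D * (n : ℝ) ^ (a + δ)⌋₊) (ha : a ≤ 1) (hδ : 0 < δ)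
    (hk₀ : 0 < k) (hk : (k : ℝ)⁻¹ ≤ 2 * δ) (hc : 1 + 2 / δ ≤ c) :
    HasSparseEmulators.{u} (12 ^ k + (12 ^ k) ^ 3 + C * 12 ^ k + 4) fun n =>
      ⌊((44 * 24 + 4 * (12 ^ k * (2 * c * D * 2)) : ℕ) : ℝ) *
        (n : ℝ) ^ (nextExponent a + 4 * δ)⌋₊ := by
  intro V _ G hG
  have := hG.nonempty
  set n := Fintype.card V
  have n_pos : 0 < n := Fintype.card_pos
  have one_le_n : (1 : ℝ) ≤ n := mod_cast n_pos
  have c_pos : 0 < c := Nat.cast_pos.1 ((by positivity : 0 < 1 + 2 / δ).trans_le hc)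
  let T := c * ⌈(n : ℝ) ^ (1 / 2 + δ)⌉₊
  have le_T_mul : (1 + 2 / δ) * (n : ℝ) ^ (1 + δ) ≤ T * ⌈√(n : ℝ)⌉₊ := by
    grw [hc, rpow_one_add_le_ceil_mul_ceil_sqrt (by positivity), ← mul_assoc, Nat.cast_mul]
  obtain ⟨E, card_E, error_E⟩ := hh.exists_hasAdditiveError hG
    (Nat.ceil_pos.2 (by positivity))
    (Nat.lt_pow_succ_log_self (Nat.one_lt_pow hk₀.ne' (by norm_num : 1 < 12)) n)
    (Nat.mul_pos c_pos (Nat.ceil_pos.2 (by positivity)))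
    (fun _ => mul_floor_rpow_le n_pos ha hδ.le)
    (two_mul_sq_mul_exp_lt_one one_le_n hδ le_T_mul)
  refine ⟨E, ?_, fun s t => (error_E s t).mono (Nat.add_le_add_left (Nat.le_floor ?_) _)⟩
  · grw [card_E, ceil_sqrt_sq_le, ← add_mul]
  · have α_pos := nextExponent_pos ha
    have radius_le := ceil_rpow_mul_pow_log_le (b := 12) n_pos hk₀.ne' α_pos.le hk
    have ceil_le := ceil_rpow_le_two_mul one_le_n (by positivity : 0 ≤ nextExponent a + 4 * δ)
    rw [← mul_assoc 2 2 δ, show (2 * 2 : ℝ) = 4 by norm_num] at radius_le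
    push_cast at radius_le ⊢
    grw [radius_le, ceil_le]
    exact (by ring : _ = _).le

theorem Achievable.nextExponent_add {a δ : ℝ} (h : Achievable.{u} (a + δ)) (ha : a ≤ 1)
    (hδ : 0 < δ) : Achievable.{u} (nextExponent a + 4 * δ) := by
  obtain ⟨C, D, hh⟩ := h
  obtain ⟨k, hk⟩ : ∃ k : ℕ, (2 * δ)⁻¹ ≤ k := ⟨_, Nat.le_ceil _⟩
  obtain ⟨c, hc⟩ : ∃ c : ℕ, 1 + 2 / δ ≤ c := ⟨_, Nat.le_ceil _⟩
  have k_pos : 0 < k := Nat.cast_pos.1 ((by positivity : 0 < (2 * δ)⁻¹).trans_le hk)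
  exact ⟨_, _, hh.nextExponent_add ha hδ k_pos (inv_le_of_inv_le₀ (by positivity) hk) hc⟩

theorem achievable_aSeq (i : ℕ) (ε : ℝ) (hε : 0 < ε) : Achievable.{u} (aSeq i + ε) := by
  induction i generalizing ε with
  | zero => exact .of_one_le (by rw [aSeq]; linarith)
  | succ i ih =>
    have step := (ih (ε / 4) (by positivity)).nextExponent_add (aSeq_le_one i) (by positivity)
    rwa [mul_div_cancel₀ ε (by norm_num)] at step

end Achievable

theorem iterated_emulator_bounds :
    ∀ i : ℕ, ∀ ε : ℝ, 0 < ε → ∃ C : ℝ, 0 < C ∧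
      ∀ n : ℕ, ∀ G : SimpleGraph (Fin n), G.Connected →
        ∃ (H : SimpleGraph (Fin n)) (w : Sym2 (Fin n) → ℕ),
          IsAdditiveEmulator G H w ⌈C * (n : ℝ) ^ (aSeq i + ε)⌉₊ ∧
          (H.edgeSet.ncard : ℝ) ≤ C * n := by
  intro i ε hε
  obtain ⟨C, D, hh⟩ := achievable_aSeq i ε hε
  refine ⟨C + D + 1, by positivity, fun n G hG => ?_⟩
  obtain ⟨E, card_E, error_E⟩ := hh (Fin n) G hG
  rw [Fintype.card_fin] at card_E error_E
  have error_le : ⌊D * (n : ℝ) ^ (aSeq i + ε)⌋₊ ≤ ⌈(C + D + 1) * (n : ℝ) ^ (aSeq i + ε)⌉₊ := by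
    grw [Nat.floor_le_ceil]
    gcongr
    linarith [(Nat.cast_nonneg C : (0 : ℝ) ≤ C)]
  refine ⟨_, _, HasAdditiveError.isAdditiveEmulator hG fun s t =>
    (error_E s t).mono (Nat.add_le_add_left error_le _), ?_⟩
  calc ((fromEdgeSet (E : Set (Sym2 (Fin n)))).edgeSet.ncard : ℝ) ≤ C * n :=
        mod_cast (ncard_edgeSet_fromEdgeSet_le E).trans card_E
    _ ≤ (C + D + 1) * n := by gcongr; linarith [(Nat.cast_nonneg D : (0 : ℝ) ≤ D)]
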